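/- Let $(w_N)$ be probability weights on $\mathbb{N} \cup \{0\}$ and suppose, for a fixed $C > 0$: (a) $\limsup_{N} \sum_{k \notin I_{N,C}} w_N(k) \le \varepsilon$, and (b) on $I_{N,C}$ one has $w_N(k) = g_N(k)(1 + \varepsilon_k(N))$ with $g_N(k) = \frac{1}{\sqrt{2\pi \log\log N}} \exp(-(k - \log\log N)^2/(2\log\log N))$ and $\sup_{k \in I_{N,C}} |\varepsilon_k(N)| \to 0$. Then $\limsup_{N \to \infty} \sum_{k \ge 0} |w_N(k+1) - w_N(k)| \le 4\varepsilon$ (up to an absolute constant times $\varepsilon$). -/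

import Mathlib

open Filter

/-!
The seminorm `V f = ∑ k, |f (k + 1) - f k|` is at most `2 * M` on nonnegative unimodal sequences
bounded by `M`, and it moves by at most `2 * ∑ k, |f k - g k|` when `f` is replaced by `g`.
Truncating the comparison sequence `g_N` to the window keeps it unimodal, its supremum tends to `0`,
and its `ℓ¹` distance to `w_N` is at most the tail mass of `w_N` plus `o(1)`. Hence `V w_N` is at
most twice the tail mass plus `o(1)`. For the Gaussian `g_N` the supremum is at most
`1 / √(2π log log N)`.
-/

open ProbabilityTheory

/-- Quasi-concavity along the order: `f` rises to a peak and then falls. No peak is named, so that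
truncating `f` to an interval away from its peak is covered as well. -/
def IsUnimodal {α β : Type*} [Preorder α] [LinearOrder β] (f : α → β) : Prop :=
  ∀ ⦃a b c⦄, a ≤ b → b ≤ c → min (f a) (f c) ≤ f b

/-- The total variation of a sequence, i.e. the `ℓ¹` distance between `f` and its shift. It has the
junk value `0` when the series diverges. -/
noncomputable def shiftVariation {E : Type*} [SeminormedAddCommGroup E] (f : ℕ → E) : ℝ :=
  ∑' k, ‖f (k + 1) - f k‖

section ShiftVariation

variable {E : Type*} [SeminormedAddCommGroup E] {f g : ℕ → E}

lemma shiftVariation_nonneg (f : ℕ → E) : 0 ≤ shiftVariation f :=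
  tsum_nonneg fun _ => norm_nonneg _

lemma summable_norm_sub_succ (hf : Summable fun k => ‖f k‖) :
    Summable fun k => ‖f (k + 1) - f k‖ :=
  .of_nonneg_of_le (fun _ => norm_nonneg _) (fun _ => norm_sub_le _ _)
    (((summable_nat_add_iff 1).2 hf).add hf)

lemma shiftVariation_le_two_mul_tsum_norm (hf : Summable fun k => ‖f k‖) :
    shiftVariation f ≤ 2 * ∑' k, ‖f k‖ := by
  have hshift : Summable fun k => ‖f (k + 1)‖ := (summable_nat_add_iff 1).2 hf
  calc shiftVariation f ≤ ∑' k, (‖f (k + 1)‖ + ‖f k‖) :=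
        (summable_norm_sub_succ hf).tsum_le_tsum (fun _ => norm_sub_le _ _) (hshift.add hf)
    _ = ∑' k, ‖f (k + 1)‖ + ∑' k, ‖f k‖ := hshift.tsum_add hf
    _ ≤ 2 * ∑' k, ‖f k‖ := by linarith [hf.tsum_eq_zero_add, norm_nonneg (f 0)]

lemma shiftVariation_add_le (hf : Summable fun k => ‖f k‖) (hg : Summable fun k => ‖g k‖) :
    shiftVariation (f + g) ≤ shiftVariation f + shiftVariation g := by
  have htriangle (k : ℕ) :
      ‖(f + g) (k + 1) - (f + g) k‖ ≤ ‖f (k + 1) - f k‖ + ‖g (k + 1) - g k‖ := by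
    simpa only [Pi.add_apply, add_sub_add_comm] using norm_add_le _ _
  have hsum := (summable_norm_sub_succ hf).add (summable_norm_sub_succ hg)
  calc shiftVariation (f + g) ≤ ∑' k, (‖f (k + 1) - f k‖ + ‖g (k + 1) - g k‖) :=
        (hsum.of_nonneg_of_le (fun _ => norm_nonneg _) htriangle).tsum_le_tsum htriangle hsum
    _ = shiftVariation f + shiftVariation g :=
        (summable_norm_sub_succ hf).tsum_add (summable_norm_sub_succ hg)

end ShiftVariation

lemma sum_range_abs_sub_succ_of_monotoneOn_of_antitoneOn {f : ℕ → ℝ} {m n : ℕ} (hmn : m ≤ n)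
    (hmono : MonotoneOn f (Set.Iic m)) (hanti : AntitoneOn f (Set.Icc m n)) :
    ∑ k ∈ Finset.range n, |f (k + 1) - f k| = 2 * f m - f 0 - f n := by
  -- Reflecting `f` upwards after its peak makes every increment nonnegative.
  set F : ℕ → ℝ := fun k => 2 * f (min k m) - f k with hF
  have hincrement : ∀ k ∈ Finset.range n, |f (k + 1) - f k| = F (k + 1) - F k := by
    intro k hk
    rw [Finset.mem_range] at hk
    rcases lt_or_ge k m with hkm | hmk
    · have hle : f k ≤ f (k + 1) := hmono hkm.le hkm k.le_succ
      rw [abs_of_nonneg (sub_nonneg.2 hle), hF]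
      simp only [min_eq_left hkm.le, min_eq_left (Nat.succ_le_of_lt hkm)]
      ring
    · have hle : f (k + 1) ≤ f k := hanti ⟨hmk, hk.le⟩ ⟨by omega, hk⟩ k.le_succ
      rw [abs_of_nonpos (sub_nonpos.2 hle), hF]
      simp only [min_eq_right hmk, min_eq_right (hmk.trans k.le_succ)]
      ring
  rw [Finset.sum_congr rfl hincrement, Finset.sum_range_sub, hF]
  simp only [min_eq_right hmn, Nat.zero_min]
  ring

namespace IsUnimodal

lemma comp_monotone {α β γ : Type*} [Preorder α] [Preorder β] [LinearOrder γ] {f : β → γ}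
    {φ : α → β} (hf : IsUnimodal f) (hφ : Monotone φ) : IsUnimodal (f ∘ φ) :=
  fun _ _ _ hab hbc => hf (hφ hab) (hφ hbc)

lemma indicator {α β : Type*} [Preorder α] [LinearOrder β] [Zero β] {f : α → β} {s : Set α}
    (hf : IsUnimodal f) (hs : s.OrdConnected) (hnonneg : ∀ x ∈ s, 0 ≤ f x) :
    IsUnimodal (s.indicator f) := by
  intro a b c hab hbc
  by_cases hac : a ∈ s ∧ c ∈ s
  · have hb : b ∈ s := hs.out hac.1 hac.2 ⟨hab, hbc⟩
    simpa only [Set.indicator_of_mem, hac.1, hac.2, hb] using hf hab hbc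
  · have hmin : min (s.indicator f a) (s.indicator f c) ≤ 0 := by
      rcases not_and_or.1 hac with ha | hc
      · exact min_le_of_left_le (Set.indicator_of_notMem ha f).le
      · exact min_le_of_right_le (Set.indicator_of_notMem hc f).le
    exact hmin.trans (Set.indicator_nonneg hnonneg b)

lemma exists_monotoneOn_antitoneOn {β : Type*} [LinearOrder β] {f : ℕ → β} (hf : IsUnimodal f)
    (n : ℕ) : ∃ m ≤ n, MonotoneOn f (Set.Iic m) ∧ AntitoneOn f (Set.Icc m n) := by
  obtain ⟨m, hmn, hmax⟩ := (Finset.Iic n).exists_max_image f Finset.nonempty_Iic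
  simp only [Finset.mem_Iic] at hmn hmax
  refine ⟨m, hmn, fun a _ b hb hab => ?_, fun b hb c hc hbc => ?_⟩
  · exact (le_min le_rfl (hmax a ((hab.trans hb).trans hmn))).trans (hf hab hb)
  · exact (le_min (hmax c hc.2) le_rfl).trans (hf hb.1 hbc)

lemma shiftVariation_le {f : ℕ → ℝ} {M : ℝ} (hf : IsUnimodal f) (hnonneg : ∀ k, 0 ≤ f k)
    (hle : ∀ k, f k ≤ M) : shiftVariation f ≤ 2 * M := by
  refine Real.tsum_le_of_sum_range_le (fun _ => norm_nonneg _) fun n => ?_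
  obtain ⟨m, hmn, hmono, hanti⟩ := hf.exists_monotoneOn_antitoneOn n
  simp only [Real.norm_eq_abs]
  rw [sum_range_abs_sub_succ_of_monotoneOn_of_antitoneOn hmn hmono hanti]
  linarith [hle m, hnonneg 0, hnonneg n]

end IsUnimodal

section Truncation

variable {α : Type*} {s : Set α} {w g : α → ℝ} {δ : ℝ}

lemma abs_sub_indicator_le (hw : ∀ k, 0 ≤ w k) (hδ : 0 ≤ δ) (hδ' : δ ≤ 1 / 2)
    (hwg : ∀ k ∈ s, |w k - g k| ≤ δ * g k) (k : α) :
    |w k - s.indicator g k| ≤ sᶜ.indicator w k + 2 * δ * w k := by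
  by_cases hk : k ∈ s
  · rw [Set.indicator_of_mem hk, Set.indicator_of_notMem (Set.notMem_compl_iff.2 hk), zero_add]
    have hgw : g k ≤ 2 * w k := by
      have hlower := (abs_le.1 (hwg k hk)).1
      rcases le_total (g k) 0 with hg | hg
      · linarith [hw k]
      · linarith [mul_le_mul_of_nonneg_right hδ' hg]
    calc |w k - g k| ≤ δ * g k := hwg k hk
      _ ≤ δ * (2 * w k) := mul_le_mul_of_nonneg_left hgw hδ
      _ = 2 * δ * w k := by ring
  · rw [Set.indicator_of_notMem hk, Set.indicator_of_mem (Set.mem_compl hk), sub_zero,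
      abs_of_nonneg (hw k)]
    exact le_add_of_nonneg_right (mul_nonneg (mul_nonneg zero_le_two hδ) (hw k))

lemma summable_sub_indicator (hw : ∀ k, 0 ≤ w k) (hsum : Summable w) (hδ : 0 ≤ δ)
    (hδ' : δ ≤ 1 / 2) (hwg : ∀ k ∈ s, |w k - g k| ≤ δ * g k) :
    Summable fun k => |w k - s.indicator g k| :=
  .of_nonneg_of_le (fun _ => abs_nonneg _) (abs_sub_indicator_le hw hδ hδ' hwg)
    ((hsum.indicator _).add (hsum.mul_left _))

lemma tsum_abs_sub_indicator_le (hw : ∀ k, 0 ≤ w k) (hsum : Summable w) (hδ : 0 ≤ δ)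
    (hδ' : δ ≤ 1 / 2) (hwg : ∀ k ∈ s, |w k - g k| ≤ δ * g k) :
    ∑' k, |w k - s.indicator g k| ≤ ∑' k, sᶜ.indicator w k + 2 * δ * ∑' k, w k := by
  have htail : Summable (sᶜ.indicator w) := hsum.indicator _
  rw [← tsum_mul_left, ← htail.tsum_add (hsum.mul_left _)]
  exact (summable_sub_indicator hw hsum hδ hδ' hwg).tsum_le_tsum
    (abs_sub_indicator_le hw hδ hδ' hwg) (htail.add (hsum.mul_left _))

end Truncation

lemma shiftVariation_le_of_isUnimodal_of_abs_sub_le {w g : ℕ → ℝ} {s : Set ℕ} {δ M : ℝ}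
    (hw : ∀ k, 0 ≤ w k) (hsum : Summable w) (hs : s.OrdConnected) (hg : IsUnimodal g)
    (hM : 0 ≤ M) (hgM : ∀ k ∈ s, g k ≤ M) (hδ : 0 < δ) (hδ' : δ ≤ 1 / 2)
    (hwg : ∀ k ∈ s, |w k - g k| ≤ δ * g k) :
    shiftVariation w ≤ 2 * M + 2 * (∑' k, sᶜ.indicator w k + 2 * δ * ∑' k, w k) := by
  set v := s.indicator g
  have hdiff : Summable fun k => ‖(w - v) k‖ := summable_sub_indicator hw hsum hδ.le hδ' hwg
  have hv : Summable fun k => ‖v k‖ := by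
    simpa only [Pi.sub_apply, sub_sub_cancel] using (hsum.sub hdiff.of_norm).norm
  have hg0 : ∀ k ∈ s, 0 ≤ g k := fun k hk =>
    nonneg_of_mul_nonneg_right ((abs_nonneg _).trans (hwg k hk)) hδ
  have hvM : ∀ k, v k ≤ M := fun _ => Set.indicator_le' hgM (fun _ _ => hM) _
  calc shiftVariation w = shiftVariation (v + (w - v)) := by rw [add_sub_cancel]
    _ ≤ shiftVariation v + shiftVariation (w - v) := shiftVariation_add_le hv hdiff
    _ ≤ 2 * M + 2 * (∑' k, sᶜ.indicator w k + 2 * δ * ∑' k, w k) := by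
      gcongr
      · exact (hg.indicator hs hg0).shiftVariation_le (Set.indicator_nonneg hg0) hvM
      · exact (shiftVariation_le_two_mul_tsum_norm hdiff).trans
          (mul_le_mul_of_nonneg_left (tsum_abs_sub_indicator_le hw hsum hδ.le hδ' hwg) zero_le_two)

theorem limsup_shiftVariation_le_of_isUnimodal {ι : Type*} {l : Filter ι} [l.NeBot]
    {w g : ι → ℕ → ℝ} {I : ι → Set ℕ}
    (hw : ∀ i k, 0 ≤ w i k) (hsum : ∀ i, HasSum (w i) 1)
    (hI : ∀ i, (I i).OrdConnected) (hg : ∀ i, IsUnimodal (g i))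
    (hsup : ∀ δ > 0, ∀ᶠ i in l, ∀ k ∈ I i, g i k ≤ δ)
    (hwg : ∀ δ > 0, ∀ᶠ i in l, ∀ k ∈ I i, |w i k - g i k| ≤ δ * g i k) :
    limsup (fun i => shiftVariation (w i)) l ≤
      2 * limsup (fun i => ∑' k, (I i)ᶜ.indicator (w i) k) l := by
  set tail : ι → ℝ := fun i => ∑' k, (I i)ᶜ.indicator (w i) k
  have htail_le_one (i : ι) : tail i ≤ 1 :=
    hasSum_le (Set.indicator_le_self' fun k _ => hw i k)
      ((hsum i).summable.indicator _).hasSum (hsum i)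
  refine le_of_forall_pos_le_add fun η hη => ?_
  obtain ⟨δ, hδ, hδη, hδ_half⟩ : ∃ δ > 0, δ ≤ η / 8 ∧ δ ≤ 1 / 2 :=
    ⟨min (η / 8) (1 / 2), by positivity, min_le_left _ _, min_le_right _ _⟩
  have htail : ∀ᶠ i in l, tail i < limsup tail l + δ :=
    eventually_lt_of_limsup_lt (lt_add_of_pos_right _ hδ) (isBoundedUnder_of ⟨1, htail_le_one⟩)
  refine limsup_le_of_le (IsBoundedUnder.isCoboundedUnder_le
    (isBoundedUnder_of ⟨0, fun i => shiftVariation_nonneg (w i)⟩)) ?_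
  filter_upwards [htail, hsup δ hδ, hwg δ hδ] with i htail_i hsup_i hwg_i
  have hV : shiftVariation (w i) ≤ 2 * δ + 2 * (tail i + 2 * δ * ∑' k, w i k) :=
    shiftVariation_le_of_isUnimodal_of_abs_sub_le (hw i) (hsum i).summable (hI i) (hg i) hδ.le
      hsup_i hδ hδ_half hwg_i
  rw [(hsum i).tsum_eq] at hV
  linarith

lemma ordConnected_setOf_abs_natCast_sub_le (c r : ℝ) :
    {k : ℕ | |(k : ℝ) - c| ≤ r}.OrdConnected := by
  have hpreimage : {k : ℕ | |(k : ℝ) - c| ≤ r} = Nat.cast ⁻¹' Set.Icc (c - r) (c + r) := by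
    ext k
    rw [Set.mem_ofPred_eq, abs_sub_comm, Set.mem_preimage, Set.mem_Icc_iff_abs_le]
  rw [hpreimage]
  exact Set.ordConnected_Icc.preimage_mono Nat.mono_cast

section Gaussian

open scoped NNReal

lemma gaussianPDFReal_le_of_abs_sub_le {μ x y : ℝ} (v : ℝ≥0) (h : |x - μ| ≤ |y - μ|) :
    gaussianPDFReal μ v y ≤ gaussianPDFReal μ v x := by
  have hsq : (x - μ) ^ 2 ≤ (y - μ) ^ 2 := sq_le_sq.2 h
  simp only [gaussianPDFReal]
  gcongr

lemma gaussianPDFReal_le (μ : ℝ) (v : ℝ≥0) (x : ℝ) :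
    gaussianPDFReal μ v x ≤ (√(2 * Real.pi * v))⁻¹ :=
  calc gaussianPDFReal μ v x ≤ gaussianPDFReal μ v μ :=
        gaussianPDFReal_le_of_abs_sub_le v (by simp)
    _ = (√(2 * Real.pi * v))⁻¹ := by simp [gaussianPDFReal]

lemma isUnimodal_gaussianPDFReal (μ : ℝ) (v : ℝ≥0) : IsUnimodal (gaussianPDFReal μ v) := by
  intro a b c hab hbc
  rcases le_max_iff.1 (abs_le_max_abs_abs (sub_le_sub_right hab μ) (sub_le_sub_right hbc μ))
    with hba | hbc
  · exact min_le_of_left_le (gaussianPDFReal_le_of_abs_sub_le v hba)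
  · exact min_le_of_right_le (gaussianPDFReal_le_of_abs_sub_le v hbc)

-- For `v ≤ 0` both sides are `0`, through `√(2 * π * v) = 0` and `0⁻¹ = 0`.
lemma gaussianPDFReal_toNNReal (μ v x : ℝ) :
    gaussianPDFReal μ v.toNNReal x =
      (√(2 * Real.pi * v))⁻¹ * Real.exp (-(x - μ) ^ 2 / (2 * v)) := by
  rcases le_total 0 v with hv | hv
  · rw [gaussianPDFReal, Real.coe_toNNReal v hv]
  · have hsqrt : √(2 * Real.pi * v) = 0 :=
      Real.sqrt_eq_zero_of_nonpos (mul_nonpos_of_nonneg_of_nonpos Real.two_pi_pos.le hv)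
    simp [Real.toNNReal_of_nonpos hv, hsqrt]

lemma eventually_forall_gaussianPDFReal_le {ι : Type*} {l : Filter ι} {v : ι → ℝ}
    (hv : Tendsto v l atTop) {δ : ℝ} (hδ : 0 < δ) :
    ∀ᶠ i in l, ∀ μ x, gaussianPDFReal μ (v i).toNNReal x ≤ δ := by
  have hpeak : Tendsto (fun i => (√(2 * Real.pi * (v i).toNNReal))⁻¹) l (nhds 0) :=
    tendsto_inv_atTop_zero.comp (Real.tendsto_sqrt_atTop.comp
      ((tendsto_atTop_mono (fun i => Real.le_coe_toNNReal (v i)) hv).const_mul_atTop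
        Real.two_pi_pos))
  filter_upwards [hpeak.eventually_le_const hδ] with i hi μ x
  exact (gaussianPDFReal_le μ _ x).trans hi

end Gaussian

lemma abs_sub_le_mul_of_eq_mul_one_add {x y e δ : ℝ} (hy : 0 ≤ y) (hx : x = y * (1 + e))
    (he : |e| ≤ δ) : |x - y| ≤ δ * y := by
  have hdiff : x - y = e * y := by rw [hx]; ring
  rw [hdiff, abs_mul, abs_of_nonneg hy]
  exact mul_le_mul_of_nonneg_right he hy

lemma tendsto_log_log_natCast_atTop :
    Tendsto (fun N : ℕ => Real.log (Real.log N)) atTop atTop :=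
  Real.tendsto_log_atTop.comp (Real.tendsto_log_atTop.comp tendsto_natCast_atTop_atTop)

theorem stmt13_general {ι : Type*} {l : Filter ι} [l.NeBot] {L r : ι → ℝ} {w e : ι → ℕ → ℝ}
    (hL : Tendsto L l atTop) (hw : ∀ i k, 0 ≤ w i k) (hsum : ∀ i, HasSum (w i) 1)
    (happrox : ∀ i, ∀ k : ℕ, |(k : ℝ) - L i| ≤ r i →
      w i k = (√(2 * Real.pi * L i))⁻¹ * Real.exp (-((k : ℝ) - L i) ^ 2 / (2 * L i)) * (1 + e i k))
    (herr : ∀ δ > 0, ∀ᶠ i in l, ∀ k : ℕ, |(k : ℝ) - L i| ≤ r i → |e i k| ≤ δ) :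
    limsup (fun i => ∑' k, |w i (k + 1) - w i k|) l ≤
      2 * limsup (fun i => ∑' k : ℕ, if |(k : ℝ) - L i| ≤ r i then 0 else w i k) l := by
  set I : ι → Set ℕ := fun i => {k | |(k : ℝ) - L i| ≤ r i}
  set g : ι → ℕ → ℝ := fun i k => gaussianPDFReal (L i) (L i).toNNReal k
  have hsup : ∀ δ > 0, ∀ᶠ i in l, ∀ k ∈ I i, g i k ≤ δ := fun δ hδ =>
    (eventually_forall_gaussianPDFReal_le hL hδ).mono fun i hi k _ => hi (L i) k
  have hwg : ∀ δ > 0, ∀ᶠ i in l, ∀ k ∈ I i, |w i k - g i k| ≤ δ * g i k := by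
    intro δ hδ
    filter_upwards [herr δ hδ] with i hi k hk
    exact abs_sub_le_mul_of_eq_mul_one_add (gaussianPDFReal_nonneg _ _ _)
      ((happrox i k hk).trans (by rw [← gaussianPDFReal_toNNReal])) (hi k hk)
  have htail (i : ι) :
      ∑' k, (I i)ᶜ.indicator (w i) k = ∑' k : ℕ, if |(k : ℝ) - L i| ≤ r i then 0 else w i k := by
    simp only [I, Set.indicator_apply, Set.mem_compl_iff, ite_not, Set.mem_ofPred_eq]
  simp only [← htail]
  exact limsup_shiftVariation_le_of_isUnimodal hw hsum
    (fun i => ordConnected_setOf_abs_natCast_sub_le (L i) (r i))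
    (fun i => (isUnimodal_gaussianPDFReal (L i) _).comp_monotone Nat.mono_cast) hsup hwg

/-- If probability weights `w_N` on `ℕ` are concentrated (up to mass `ε`)
on the Hardy–Ramanujan intervals `I_{N,C}` and on those intervals they agree with the
Gaussian weights `g_N` up to a uniform `(1 + o(1))` factor, then
`limsup_N ∑_k |w_N(k+1) - w_N(k)| ≤ 4ε`. -/
theorem stmt13 (C ε : ℝ) (hC : 0 < C) (hε : 0 ≤ ε)
    (w : ℕ → ℕ → ℝ) (hw0 : ∀ N k, 0 ≤ w N k) (hsum : ∀ N, HasSum (w N) 1)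
    (htail : Filter.limsup
        (fun N : ℕ => ∑' k : ℕ,
          if |(k : ℝ) - Real.log (Real.log N)| ≤ C * Real.sqrt (Real.log (Real.log N))
          then 0 else w N k) atTop ≤ ε)
    (e : ℕ → ℕ → ℝ)
    (happrox : ∀ N : ℕ, ∀ k : ℕ,
      |(k : ℝ) - Real.log (Real.log N)| ≤ C * Real.sqrt (Real.log (Real.log N)) →
      w N k = (Real.sqrt (2 * Real.pi * Real.log (Real.log N)))⁻¹
          * Real.exp (-((k : ℝ) - Real.log (Real.log N)) ^ 2
              / (2 * Real.log (Real.log N))) * (1 + e N k))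
    (herr : ∀ δ : ℝ, 0 < δ → ∃ N₀ : ℕ, ∀ N : ℕ, N₀ ≤ N → ∀ k : ℕ,
      |(k : ℝ) - Real.log (Real.log N)| ≤ C * Real.sqrt (Real.log (Real.log N)) →
      |e N k| ≤ δ) :
    Filter.limsup (fun N : ℕ => ∑' k : ℕ, |w N (k + 1) - w N k|) atTop ≤ 4 * ε := by
  linarith [stmt13_general tendsto_log_log_natCast_atTop hw0 hsum happrox
    fun δ hδ => eventually_atTop.2 (herr δ hδ)]
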